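/- Assume condition (A) and assume the Kalman rank condition (R): for each ω ∈ S^{n−1}, the m²×m real matrix obtained by stacking L, LÃ(ω), LÃ(ω)², …, LÃ(ω)^{m−1} (where Ã(ω) := (A⁰)⁻¹A(ω)) has rank m. Then condition (K) holds; more precisely, there exists a map K : ℝⁿ → M_m(ℝ) with polynomial (hence smooth) entries satisfying K(−ω) = −K(ω) for all ω ∈ ℝⁿ, such that for every ω ∈ S^{n−1} one has (K(ω)A⁰)ᵀ = −K(ω)A⁰ and (K(ω)A(ω))₁ > 0 on Ker(L). -/

import Mathlib

open Matrix BigOperators Finset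

noncomputable section

/-- Complexification of a real matrix. -/
def cmap {a b : ℕ} (X : Matrix (Fin a) (Fin b) ℝ) : Matrix (Fin a) (Fin b) ℂ :=
  X.map (fun x => (x : ℂ))

/-- Real part of the standard Hermitian inner product `⟨x, y⟩ = ∑ xᵢ conj yᵢ` on `ℂᵐ`. -/
def reIP {m : ℕ} (x y : Fin m → ℂ) : ℝ := (∑ i, x i * (starRingEnd ℂ) (y i)).re

/-- Symmetric part `X₁ = (X + Xᵀ)/2` of a real square matrix. -/
def symP {m : ℕ} (X : Matrix (Fin m) (Fin m) ℝ) : Matrix (Fin m) (Fin m) ℝ :=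
  (2⁻¹ : ℝ) • (X + Xᵀ)

/-- Skew-symmetric part `X₂ = (X − Xᵀ)/2` of a real square matrix. -/
def skewP {m : ℕ} (X : Matrix (Fin m) (Fin m) ℝ) : Matrix (Fin m) (Fin m) ℝ :=
  (2⁻¹ : ℝ) • (X - Xᵀ)

/-- Kernel of (the complexification of) a real matrix, as a subset of `ℂᵐ`. -/
def kerC {m : ℕ} (L : Matrix (Fin m) (Fin m) ℝ) : Set (Fin m → ℂ) :=
  {z | (cmap L).mulVec z = 0}

/-- Euclidean norm on `ℂᵐ`. -/
def cnrm {m : ℕ} (z : Fin m → ℂ) : ℝ := Real.sqrt (∑ i, Complex.normSq (z i))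

/-!
With `T = Ã(ω)`, take `K(ω) = ∑ₖ εₖ Bₖ (A⁰)⁻¹` where `Bₖ = (LTᵏ⁺¹)ᵀ(LTᵏ) - (LTᵏ)ᵀ(LTᵏ⁺¹)`. Each `Bₖ`
is skew-symmetric and homogeneous of the odd degree `2k + 1` in `T`, which makes `K(ω)A⁰`
skew-symmetric and `K` odd, and `BₖT` has the quadratic form `|LTᵏ⁺¹x|² - ⟨LTᵏx, LTᵏ⁺²x⟩`. For
`x ≠ 0` in `Ker L`, the rank condition gives a first index `k` with `LTᵏ⁺¹x ≠ 0`; the forms of index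
below `k` vanish at `x` and the `k`-th one is positive there. By compactness in `(ω, x)`, weights
`ε₀ ≫ ε₁ ≫ ⋯` make the weighted sum of the forms positive for all `ω` and `x` at once.
-/

section LexicographicPositivity

open Filter Topology

variable {E : Type*} [TopologicalSpace E] {s : Set E}

lemma eventually_forall_mul_add_pos (hs : IsCompact s) {f g : E → ℝ} (hf : ContinuousOn f s)
    (hg : ContinuousOn g s) (hf_nonneg : ∀ x ∈ s, 0 ≤ f x)
    (hg_pos : ∀ x ∈ s, f x = 0 → 0 < g x) :
    ∀ᶠ c in atTop, ∀ x ∈ s, 0 < c * f x + g x := by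
  refine hs.induction_on (p := fun t ↦ ∀ᶠ c in atTop, ∀ x ∈ t, 0 < c * f x + g x) (by simp)
    (fun t u htu hu ↦ hu.mono fun c hc x hx ↦ hc x (htu hx))
    (fun t u ht hu ↦ (ht.and hu).mono fun c hc x hx ↦ hx.elim (hc.1 x) (hc.2 x)) fun x hx ↦ ?_
  obtain ⟨c₀, hc₀⟩ : ∃ c₀, 0 < c₀ * f x + g x := by
    rcases (hf_nonneg x hx).eq_or_lt with hfx | hfx
    · exact ⟨0, by simpa using hg_pos x hx hfx.symm⟩
    · exact ⟨(1 - g x) / f x, by rw [div_mul_cancel₀ _ hfx.ne']; linarith⟩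
  have hnear : ∀ᶠ y in 𝓝[s] x, 0 < c₀ * f y + g y :=
    (continuousOn_const.mul hf |>.add hg) x hx |>.eventually_const_lt hc₀
  refine ⟨_, inter_mem self_mem_nhdsWithin hnear, ?_⟩
  filter_upwards [eventually_ge_atTop c₀] with c hc y ⟨hys, hy⟩
  exact hy.trans_le (by gcongr; exact hf_nonneg y hys)

lemma exists_weights_sum_pos_of_lex_pos (hs : IsCompact s) (N : ℕ) {f : ℕ → E → ℝ}
    (hf : ∀ k, Continuous (f k))
    (hlex : ∀ x ∈ s, ∃ k < N, 0 < f k x ∧ ∀ j < k, f j x = 0) :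
    ∃ ε : ℕ → ℝ, ∀ x ∈ s, 0 < ∑ k ∈ range N, ε k * f k x := by
  induction N generalizing s f with
  | zero => exact ⟨0, fun x hx ↦ by simpa using hlex x hx⟩
  | succ N ih =>
    have hzero : IsCompact (s ∩ {x | f 0 x = 0}) :=
      hs.inter_right (isClosed_eq (hf 0) continuous_const)
    obtain ⟨ε, hε⟩ := ih hzero (fun k ↦ hf (k + 1)) fun x ⟨hx, hx0⟩ ↦ by
      obtain ⟨_ | k, hkN, hpos, hvanish⟩ := hlex x hx
      · exact absurd hx0 hpos.ne'
      · exact ⟨k, by lia, hpos, fun j hj ↦ hvanish (j + 1) (by lia)⟩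
    have hnonneg : ∀ x ∈ s, 0 ≤ f 0 x := fun x hx ↦ by
      obtain ⟨_ | k, -, hpos, hvanish⟩ := hlex x hx
      · exact hpos.le
      · exact (hvanish 0 k.succ_pos).ge
    -- The weight of `f 0` is chosen last, so large that `f 0` dominates wherever it is positive.
    obtain ⟨c, hc⟩ := (eventually_forall_mul_add_pos hs (hf 0).continuousOn
      (continuous_finsetSum _ fun k _ ↦ continuous_const.mul (hf (k + 1))).continuousOn
      hnonneg fun x hx hx0 ↦ hε x ⟨hx, hx0⟩).exists
    refine ⟨Nat.rec c fun k _ ↦ ε k, fun x hx ↦ ?_⟩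
    rw [sum_range_succ', add_comm]
    exact hc x hx

end LexicographicPositivity

lemma isCompact_setOf_sum_sq_eq_one (ι : Type*) [Fintype ι] :
    IsCompact {ω : ι → ℝ | ∑ j, ω j ^ 2 = 1} := by
  refine (isCompact_closedBall (0 : ι → ℝ) 1).of_isClosed_subset
    (isClosed_eq (by fun_prop) continuous_const) fun ω hω ↦ ?_
  rw [mem_closedBall_zero_iff, pi_norm_le_iff_of_nonneg zero_le_one]
  intro i
  rw [Real.norm_eq_abs, ← sq_le_one_iff_abs_le_one, ← show ∑ j, ω j ^ 2 = 1 from hω]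
  exact single_le_sum (f := fun j ↦ ω j ^ 2) (fun j _ ↦ sq_nonneg _) (mem_univ i)

section Kalman

variable {l m R : Type*} [Fintype m] [DecidableEq m]

/-- The Kalman observability matrix of the pair `(L, T)`: the blocks `L, LT, …, LT^{N-1}` stacked
on top of each other, the row index being (number of the block, row of the block). -/
def kalmanMatrix [Semiring R] (L : Matrix l m R) (T : Matrix m m R) (N : ℕ) :
    Matrix (Fin N × l) m R :=
  Matrix.of fun p j ↦ (L * T ^ (p.1 : ℕ)) p.2 j

lemma exists_mul_pow_mulVec_ne_zero_of_rank_kalmanMatrix [Field R] {L : Matrix l m R}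
    {T : Matrix m m R} {N : ℕ} (hR : (kalmanMatrix L T N).rank = Fintype.card m) {x : m → R}
    (hx : x ≠ 0) : ∃ k < N, (L * T ^ k) *ᵥ x ≠ 0 := by
  have hinj : Function.Injective (kalmanMatrix L T N).mulVec := by
    rw [mulVec_injective_iff, linearIndependent_iff_card_eq_finrank_span, ← hR,
      rank_eq_finrank_span_cols, Set.finrank]
  by_contra! h
  refine hx (hinj ?_)
  rw [mulVec_zero]
  exact funext fun p ↦ congrFun (h p.1 p.1.isLt) p.2

end Kalman

section Compensator

variable {l m R R' : Type*} [Fintype l] [Fintype m] [DecidableEq m] [CommRing R] [CommRing R']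

/-- The skew-symmetric matrix `(LT^{k+1})ᵀ(LT^k) - (LT^k)ᵀ(LT^{k+1})`. Multiplied by `T`, it has the
quadratic form `|LT^{k+1}x|² - ⟨LT^kx, LT^{k+2}x⟩`, which detects `LT^{k+1}x ≠ 0` once
`LT^kx = 0`. -/
def compensatorBlock (L : Matrix l m R) (T : Matrix m m R) (k : ℕ) : Matrix m m R :=
  (L * T ^ (k + 1))ᵀ * (L * T ^ k) - (L * T ^ k)ᵀ * (L * T ^ (k + 1))

/-- The weighted sum of compensator blocks that serves as `K(ω)A⁰` when `T = Ã(ω)`. The coefficient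
ring is arbitrary so that `T` may be a matrix of polynomials in `ω`. -/
def compensator (L : Matrix l m R) (T : Matrix m m R) (N : ℕ) (ε : ℕ → R) : Matrix m m R :=
  ∑ k ∈ range N, ε k • compensatorBlock L T k

variable (L : Matrix l m R) (T : Matrix m m R) (k N : ℕ) (ε : ℕ → R)

lemma transpose_compensatorBlock : (compensatorBlock L T k)ᵀ = -compensatorBlock L T k := by
  have hgram (X Y : Matrix l m R) : (Xᵀ * Y)ᵀ = Yᵀ * X := by simp
  rw [compensatorBlock, transpose_sub, hgram, hgram, neg_sub]

lemma compensatorBlock_neg : compensatorBlock L (-T) k = -compensatorBlock L T k := by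
  have hpow (i : ℕ) : L * (-T) ^ i = (-1 : R) ^ i • (L * T ^ i) := by
    rw [← neg_one_smul R T, smul_pow, Matrix.mul_smul]
  have hsign : (-1 : R) ^ (k + 1) * (-1) ^ k = -1 := by
    rw [← pow_add, Odd.neg_one_pow ⟨k, by ring⟩]
  simp only [compensatorBlock, hpow, transpose_smul, Matrix.smul_mul, Matrix.mul_smul, smul_smul,
    hsign, mul_comm ((-1 : R) ^ k), neg_one_smul, neg_sub_neg, neg_sub]

lemma map_compensatorBlock (φ : R →+* R') :
    (compensatorBlock L T k).map φ = compensatorBlock (L.map φ) (T.map φ) k := by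
  simp only [compensatorBlock, Matrix.map_sub _ (map_sub φ), Matrix.map_mul, transpose_map,
    Matrix.map_pow]

lemma dotProduct_compensatorBlock_mul_mulVec (x : m → R) :
    x ⬝ᵥ (compensatorBlock L T k * T) *ᵥ x =
      (L * T ^ (k + 1)) *ᵥ x ⬝ᵥ (L * T ^ (k + 1)) *ᵥ x -
        (L * T ^ k) *ᵥ x ⬝ᵥ (L * T ^ (k + 2)) *ᵥ x := by
  have hgram (X Y : Matrix l m R) : x ⬝ᵥ (Xᵀ * Y) *ᵥ x = X *ᵥ x ⬝ᵥ Y *ᵥ x := by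
    rw [← mulVec_mulVec, dotProduct_mulVec, vecMul_transpose]
  simp only [compensatorBlock, Matrix.sub_mul, sub_mulVec, dotProduct_sub, Matrix.mul_assoc _ _ T,
    ← pow_succ, hgram]

lemma transpose_compensator : (compensator L T N ε)ᵀ = -compensator L T N ε := by
  simp only [compensator, transpose_sum, transpose_smul, transpose_compensatorBlock, smul_neg,
    sum_neg_distrib]

lemma compensator_neg : compensator L (-T) N ε = -compensator L T N ε := by
  simp only [compensator, compensatorBlock_neg, smul_neg, sum_neg_distrib]

lemma map_compensator (φ : R →+* R') :
    (compensator L T N ε).map φ = compensator (L.map φ) (T.map φ) N (φ ∘ ε) := by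
  simp only [compensator, ← map_compensatorBlock]
  ext i j
  simp [Matrix.sum_apply]

lemma dotProduct_compensator_mul_mulVec (x : m → R) :
    x ⬝ᵥ (compensator L T N ε * T) *ᵥ x =
      ∑ k ∈ range N, ε k * (x ⬝ᵥ (compensatorBlock L T k * T) *ᵥ x) := by
  simp only [compensator, Matrix.sum_mul, Matrix.smul_mul, sum_mulVec, smul_mulVec,
    dotProduct_sum, dotProduct_smul, smul_eq_mul]

end Compensator

section Positivity

variable {l m : Type*} [Fintype l] [Fintype m] [DecidableEq m]

lemma compensatorBlock_lex_pos {L : Matrix l m ℝ} {T : Matrix m m ℝ} {N : ℕ}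
    (hR : (kalmanMatrix L T N).rank = Fintype.card m) {x : m → ℝ} (hLx : L *ᵥ x = 0)
    (hx : x ≠ 0) :
    ∃ k < N, 0 < x ⬝ᵥ (compensatorBlock L T k * T) *ᵥ x ∧
      ∀ j < k, x ⬝ᵥ (compensatorBlock L T j * T) *ᵥ x = 0 := by
  classical
  have hex := exists_mul_pow_mulVec_ne_zero_of_rank_kalmanMatrix hR hx
  obtain ⟨hlt, hne⟩ := Nat.find_spec hex
  have hvanish : ∀ j < Nat.find hex, (L * T ^ j) *ᵥ x = 0 := fun j hj ↦
    not_not.mp fun h ↦ Nat.find_min hex hj ⟨hj.trans hlt, h⟩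
  generalize Nat.find hex = k at hlt hne hvanish
  simp only [dotProduct_compensatorBlock_mul_mulVec]
  obtain _ | k := k
  · simp [hLx] at hne
  · refine ⟨k, by lia, ?_, fun j hj ↦ ?_⟩
    · rw [hvanish k k.lt_succ_self, zero_dotProduct, sub_zero]
      simpa using dotProduct_star_self_pos_iff.mpr hne
    · simp [hvanish j (by lia), hvanish (j + 1) (by lia)]

theorem exists_weights_compensator_mul_pos {Ω : Type*} [TopologicalSpace Ω] {S : Set Ω}
    (hS : IsCompact S) (L : Matrix l m ℝ) {T : Ω → Matrix m m ℝ} (hT : Continuous T) (N : ℕ)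
    (hR : ∀ ω ∈ S, (kalmanMatrix L (T ω) N).rank = Fintype.card m) :
    ∃ ε : ℕ → ℝ, ∀ ω ∈ S, ∀ x, L *ᵥ x = 0 → x ≠ 0 →
      0 < x ⬝ᵥ (compensator L (T ω) N ε * T ω) *ᵥ x := by
  have hker : IsCompact (Metric.sphere (0 : m → ℝ) 1 ∩ {x | L *ᵥ x = 0}) :=
    (isCompact_sphere _ _).inter_right (isClosed_eq (by fun_prop) continuous_const)
  have hcont (k : ℕ) : Continuous fun p : Ω × (m → ℝ) ↦
      p.2 ⬝ᵥ (compensatorBlock L (T p.1) k * T p.1) *ᵥ p.2 := by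
    unfold compensatorBlock
    fun_prop
  obtain ⟨ε, hε⟩ := exists_weights_sum_pos_of_lex_pos (hS.prod hker) N hcont
    fun p ⟨hω, hx, hLx⟩ ↦
      compensatorBlock_lex_pos (hR _ hω) hLx (ne_zero_of_mem_unit_sphere ⟨_, hx⟩)
  refine ⟨ε, fun ω hω x hLx hx ↦ ?_⟩
  have hunit : ‖x‖⁻¹ • x ∈ Metric.sphere (0 : m → ℝ) 1 := by simp [norm_smul, hx]
  have hpos := hε (ω, ‖x‖⁻¹ • x) ⟨hω, hunit, by simp [mulVec_smul, hLx]⟩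
  rw [← dotProduct_compensator_mul_mulVec, mulVec_smul, smul_dotProduct, dotProduct_smul,
    smul_smul, smul_eq_mul] at hpos
  exact pos_of_mul_pos_right hpos (mul_self_nonneg _)

end Positivity

section Existence

open MvPolynomial

variable {l m ι : Type*}

lemma map_C_map_eval {R : Type*} [CommSemiring R] (M : Matrix l m R) (ω : ι → R) :
    (M.map (C : R →+* MvPolynomial ι R)).map (eval ω) = M := by
  ext i j
  simp

lemma map_eval_sum_X_smul_map_C {R : Type*} [CommSemiring R] [Fintype ι] (A : ι → Matrix l m R)
    (ω : ι → R) :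
    (∑ i, (X i : MvPolynomial ι R) • (A i).map C).map (eval ω) = ∑ i, ω i • A i := by
  ext i j
  simp [Matrix.sum_apply]

theorem rank_condition_implies_condition_K_general [Finite l] [Fintype m] [DecidableEq m]
    [Fintype ι] {A0 : Matrix m m ℝ} (hA0 : IsUnit A0.det) (A : ι → Matrix m m ℝ)
    (L : Matrix l m ℝ) (N : ℕ) {S : Set (ι → ℝ)} (hS : IsCompact S)
    (hR : ∀ ω ∈ S, (kalmanMatrix L (A0⁻¹ * ∑ i, ω i • A i) N).rank = Fintype.card m) :
    ∃ K : (ι → ℝ) → Matrix m m ℝ,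
      (∀ i j, ∃ p : MvPolynomial ι ℝ, ∀ ω, K ω i j = eval ω p) ∧
      (∀ ω, K (-ω) = -K ω) ∧
      (∀ ω, (K ω * A0)ᵀ = -(K ω * A0)) ∧
      ∀ ω ∈ S, ∀ x, L *ᵥ x = 0 → x ≠ 0 → 0 < x ⬝ᵥ (K ω * ∑ i, ω i • A i) *ᵥ x := by
  cases nonempty_fintype l
  let P : Matrix m m (MvPolynomial ι ℝ) := A0⁻¹.map C * ∑ i, (X i : MvPolynomial ι ℝ) • (A i).map C
  have hP (ω) : P.map (eval ω) = A0⁻¹ * ∑ i, ω i • A i := by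
    rw [Matrix.map_mul, map_C_map_eval, map_eval_sum_X_smul_map_C]
  have hP_neg (ω) : P.map (eval (-ω)) = -P.map (eval ω) := by simp [hP]
  have hP_cont : Continuous fun ω ↦ P.map (eval ω) := by simp only [hP]; fun_prop
  obtain ⟨ε, hε⟩ := exists_weights_compensator_mul_pos hS L hP_cont N (by simpa only [hP] using hR)
  let Q : Matrix m m (MvPolynomial ι ℝ) := compensator (L.map C) P N (C ∘ ε) * A0⁻¹.map C
  have hQ (ω) : Q.map (eval ω) = compensator L (P.map (eval ω)) N ε * A0⁻¹ := by
    have hCε : eval ω ∘ C ∘ ε = ε := funext fun k ↦ eval_C _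
    rw [Matrix.map_mul, map_compensator, map_C_map_eval, map_C_map_eval, hCε]
  refine ⟨fun ω ↦ Q.map (eval ω), fun i j ↦ ⟨Q i j, fun ω ↦ rfl⟩, fun ω ↦ ?_, fun ω ↦ ?_,
    fun ω hω ↦ ?_⟩
  · simp only [hQ, hP_neg, compensator_neg, Matrix.neg_mul]
  · simp only [hQ, nonsing_inv_mul_cancel_right _ _ hA0, transpose_compensator]
  · simpa only [hQ, Matrix.mul_assoc, ← hP] using hε ω hω

end Existence

section Complexification

variable {m n : ℕ}

lemma re_comp_cmap_mulVec (X : Matrix (Fin m) (Fin n) ℝ) (z : Fin n → ℂ) :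
    Complex.re ∘ (cmap X *ᵥ z) = X *ᵥ (Complex.re ∘ z) := by
  ext i
  simp [mulVec, dotProduct, cmap]

lemma im_comp_cmap_mulVec (X : Matrix (Fin m) (Fin n) ℝ) (z : Fin n → ℂ) :
    Complex.im ∘ (cmap X *ᵥ z) = X *ᵥ (Complex.im ∘ z) := by
  ext i
  simp [mulVec, dotProduct, cmap]

lemma reIP_cmap_mulVec_self (X : Matrix (Fin m) (Fin m) ℝ) (z : Fin m → ℂ) :
    reIP (cmap X *ᵥ z) z =
      (Complex.re ∘ z) ⬝ᵥ X *ᵥ (Complex.re ∘ z) + (Complex.im ∘ z) ⬝ᵥ X *ᵥ (Complex.im ∘ z) := by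
  rw [← re_comp_cmap_mulVec, ← im_comp_cmap_mulVec]
  simp [reIP, dotProduct, sum_add_distrib, mul_comm]

lemma dotProduct_symP_mulVec_self (X : Matrix (Fin m) (Fin m) ℝ) (x : Fin m → ℝ) :
    x ⬝ᵥ symP X *ᵥ x = x ⬝ᵥ X *ᵥ x := by
  rw [symP, smul_mulVec, dotProduct_smul, add_mulVec, dotProduct_add, dotProduct_transpose_mulVec,
    smul_eq_mul]
  ring

lemma reIP_cmap_symP_mulVec_pos_of_mem_kerC {L X : Matrix (Fin m) (Fin m) ℝ}
    (hX : ∀ x, L *ᵥ x = 0 → x ≠ 0 → 0 < x ⬝ᵥ X *ᵥ x) {z : Fin m → ℂ} (hz : z ∈ kerC L)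
    (hz0 : z ≠ 0) : 0 < reIP (cmap (symP X) *ᵥ z) z := by
  have hz : cmap L *ᵥ z = 0 := hz
  have hre : L *ᵥ (Complex.re ∘ z) = 0 := by rw [← re_comp_cmap_mulVec, hz]; rfl
  have him : L *ᵥ (Complex.im ∘ z) = 0 := by rw [← im_comp_cmap_mulVec, hz]; rfl
  have hnonneg (x) (hx : L *ᵥ x = 0) : 0 ≤ x ⬝ᵥ X *ᵥ x := by
    rcases eq_or_ne x 0 with rfl | hx0
    · simp
    · exact (hX x hx hx0).le
  rw [reIP_cmap_mulVec_self, dotProduct_symP_mulVec_self, dotProduct_symP_mulVec_self]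
  by_cases hre0 : Complex.re ∘ z = 0
  · have him0 : Complex.im ∘ z ≠ 0 := fun him0 ↦
      hz0 (funext fun i ↦ Complex.ext (congrFun hre0 i) (congrFun him0 i))
    exact add_pos_of_nonneg_of_pos (hnonneg _ hre) (hX _ him him0)
  · exact add_pos_of_pos_of_nonneg (hX _ hre hre0) (hnonneg _ him)

lemma isUnit_det_of_reIP_cmap_mulVec_pos {X : Matrix (Fin m) (Fin m) ℝ}
    (hX : ∀ z : Fin m → ℂ, z ≠ 0 → 0 < reIP (cmap X *ᵥ z) z) : IsUnit X.det := by
  rw [isUnit_iff_ne_zero]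
  intro hdet
  obtain ⟨v, hv, hXv⟩ := exists_mulVec_eq_zero_iff.mpr hdet
  have hpos := hX (fun i ↦ (v i : ℂ)) fun h ↦ hv (funext fun i ↦ by simpa using congrFun h i)
  rw [reIP_cmap_mulVec_self] at hpos
  have hre : Complex.re ∘ (fun i ↦ (v i : ℂ)) = v := rfl
  have him : Complex.im ∘ (fun i ↦ (v i : ℂ)) = 0 := rfl
  simp [hre, him, hXv] at hpos

end Complexification

/-- **Theorem 4.3 (the rank condition (R) implies condition (K)).**
Under condition (A), if for each `ω ∈ S^{n−1}` the stacked matrix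
`[L; LÃ(ω); …; LÃ(ω)^{m−1}]` (with `Ã(ω) = (A⁰)⁻¹A(ω)`) has rank `m`, then there is a
compensating matrix family `K(ω)` with polynomial (hence smooth) entries, odd in `ω`,
with `(K(ω)A⁰)ᵀ = −K(ω)A⁰` and `(K(ω)A(ω))₁ > 0` on `Ker(L)` for every `ω ∈ S^{n−1}`. -/
theorem rank_condition_implies_condition_K
    (m n : ℕ) (hm : 1 ≤ m) (hn : 1 ≤ n)
    (A0 : Matrix (Fin m) (Fin m) ℝ) (A : Fin n → Matrix (Fin m) (Fin m) ℝ)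
    (L : Matrix (Fin m) (Fin m) ℝ)
    -- condition (A)
    (hA0sym : A0ᵀ = A0) (hAsym : ∀ j, (A j)ᵀ = A j)
    (hA0pos : ∀ z : Fin m → ℂ, z ≠ 0 → 0 < reIP ((cmap A0).mulVec z) z)
    (hLnn : ∀ z : Fin m → ℂ, 0 ≤ reIP ((cmap L).mulVec z) z)
    (hLker : ∃ z : Fin m → ℂ, z ≠ 0 ∧ z ∈ kerC L)
    -- condition (R): the Kalman rank condition
    (hR : ∀ ω : Fin n → ℝ, (∑ j, ω j ^ 2 = 1) →
      Matrix.rank (Matrix.of fun p : Fin m × Fin m => fun j : Fin m =>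
        (L * (A0⁻¹ * (∑ i, ω i • A i)) ^ (p.1 : ℕ)) p.2 j) = m) :
    ∃ K : (Fin n → ℝ) → Matrix (Fin m) (Fin m) ℝ,
      (∀ i j, ∃ p : MvPolynomial (Fin n) ℝ, ∀ ω, K ω i j = MvPolynomial.eval ω p) ∧
      (∀ ω : Fin n → ℝ, K (-ω) = - K ω) ∧
      (∀ ω : Fin n → ℝ, (∑ j, ω j ^ 2 = 1) →
        (K ω * A0)ᵀ = -(K ω * A0) ∧
        (∀ z ∈ kerC L, z ≠ 0 →
          0 < reIP ((cmap (symP (K ω * (∑ j, ω j • A j)))).mulVec z) z)) := by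
  obtain ⟨K, hpoly, hodd, hskew, hpos⟩ := rank_condition_implies_condition_K_general
    (isUnit_det_of_reIP_cmap_mulVec_pos hA0pos) A L m (isCompact_setOf_sum_sq_eq_one (Fin n))
    fun ω hω ↦ (hR ω hω).trans (Fintype.card_fin m).symm
  exact ⟨K, hpoly, hodd, fun ω hω ↦
    ⟨hskew ω, fun z hz hz0 ↦ reIP_cmap_symP_mulVec_pos_of_mem_kerC (hpos ω hω) hz hz0⟩⟩
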